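/- The permutation shelf: on the group Perm(ℕ) of permutations of ℕ, define the shift group endomorphism sh by sh(f)(0) = 0 and sh(f)(n+1) = f(n) + 1, and define f ▷ g := f ∘ sh(g) ∘ (swap 0 1) ∘ sh(f)⁻¹. Then ▷ obeys the left selfdistributivity law f ▷ (g ▷ h) = (f ▷ g) ▷ (f ▷ h) for all f, g, h ∈ Perm(ℕ); moreover, the group homomorphism perm : B_∞ → Perm(ℕ) determined by perm(σ_i) = swap(i−1, i) satisfies perm(β₁ ▷ β₂) = perm(β₁) ▷ perm(β₂) for all β₁, β₂ ∈ B_∞. -/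

import Mathlib

/-- The braid relations on generators indexed by `ℕ` (generator `i` stands for
the Artin generator `σ_{i+1}` of the paper). -/
def braidRels : Set (FreeGroup ℕ) :=
  {r | (∃ i j : ℕ, i + 2 ≤ j ∧
          r = .of i * .of j * (.of i)⁻¹ * (.of j)⁻¹) ∨
       (∃ i : ℕ,
          r = .of i * .of (i + 1) * .of i *
              (.of (i + 1) * .of i * .of (i + 1))⁻¹)}

/-- The braid group on infinitely many strands. -/
abbrev Binf : Type := PresentedGroup braidRels

/-- `σ i` is the Artin generator `σ_{i+1}` of the paper (0-indexed). -/
def σ (i : ℕ) : Binf := PresentedGroup.of i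

lemma mk_rel_eq_one {r : FreeGroup ℕ} (h : r ∈ braidRels) :
    PresentedGroup.mk braidRels r = 1 :=
  (QuotientGroup.eq_one_iff r).mpr (Subgroup.subset_normalClosure h)

lemma shift_lift_eq_one :
    ∀ r ∈ braidRels, FreeGroup.lift (fun n => σ (n + 1)) r = 1 := by
  intro r hr
  have key : ∀ s ∈ braidRels, FreeGroup.lift (fun n => σ (n + 1)) s
      = PresentedGroup.mk braidRels (FreeGroup.map (· + 1) s) := by
    intro s _
    have : (FreeGroup.lift (fun n => σ (n + 1)) : FreeGroup ℕ →* Binf)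
        = (PresentedGroup.mk braidRels).comp (FreeGroup.map (· + 1)) := by
      apply FreeGroup.ext_hom
      intro x
      simp [σ, PresentedGroup.of]
    rw [this]; rfl
  rw [key r hr]
  apply mk_rel_eq_one
  rcases hr with ⟨i, j, hij, rfl⟩ | ⟨i, rfl⟩
  · exact Or.inl ⟨i + 1, j + 1, by omega, by simp⟩
  · exact Or.inr ⟨i + 1, by simp⟩

/-- The shift endomorphism of the braid group, mapping `σ i` to `σ (i+1)`. -/
def sh : Binf →* Binf := PresentedGroup.toGroup shift_lift_eq_one

@[simp] lemma sh_σ (i : ℕ) : sh (σ i) = σ (i + 1) :=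
  PresentedGroup.toGroup.of shift_lift_eq_one

/-- The shifted-conjugation (selfdistributive) operation on `Binf`:
`β₁ ▷ β₂ = β₁ · sh β₂ · σ₁ · (sh β₁)⁻¹`. -/
def sc (β₁ β₂ : Binf) : Binf := β₁ * sh β₂ * σ 0 * (sh β₁)⁻¹

/-- The underlying function of the shift of a permutation of `ℕ`. -/
def shFunP (f : ℕ → ℕ) : ℕ → ℕ
  | 0 => 0
  | n + 1 => f n + 1

/-- The shift endomorphism of `Equiv.Perm ℕ`: `shP f 0 = 0` and
`shP f (n+1) = f n + 1`. -/
def shP (f : Equiv.Perm ℕ) : Equiv.Perm ℕ where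
  toFun := shFunP f
  invFun := shFunP f.symm
  left_inv n := by cases n <;> simp [shFunP]
  right_inv n := by cases n <;> simp [shFunP]

/-- Shifted conjugation on permutations of `ℕ`:
`f ▷ g = f ∘ sh g ∘ (swap 0 1) ∘ (sh f)⁻¹`
(the paper's 1-indexed `s₁ = swap 1 2` is `swap 0 1` in 0-indexed form). -/
def scP (f g : Equiv.Perm ℕ) : Equiv.Perm ℕ :=
  f * shP g * Equiv.swap 0 1 * (shP f)⁻¹

/-!
In any group with an endomorphism `φ` and an element `a`, the operation
`x ▷ y = x * φ y * a * (φ x)⁻¹` is left selfdistributive as soon as `a` commutes with the image of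
`φ ∘ φ` and `a`, `φ a` satisfy the braid relation: `(x ▷ y) ▷ (x ▷ z)` and `x ▷ (y ▷ z)` then differ
only by the factors `a * φ a * a * (φ a)⁻¹` and `φ a * a`. For permutations of `ℕ` with the shift
and `a = swap 0 1`, the first condition holds because a doubly shifted permutation fixes `0` and
`1`, and the second is the braid relation between adjacent transpositions.
The operation is natural in `(G, φ, a)`, so the projection of braids to permutations preserves it
because it intertwines the two shifts.
-/

section ShiftedConj

variable {G H : Type*} [Group G] [Group H]

/-- Shifted conjugation `x ▷ y = x * φ y * a * (φ x)⁻¹` in a group `G`, with an arbitrary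
endomorphism `φ` as the shift and an arbitrary element `a` in the role of `σ₁`. It specializes to
both `sc` and `scP`. -/
def shiftedConj (φ : G →* G) (a x y : G) : G := x * φ y * a * (φ x)⁻¹

theorem map_shiftedConj {φ : G →* G} {ψ : H →* H} {F : G →* H}
    (hF : ∀ x, F (φ x) = ψ (F x)) (a x y : G) :
    F (shiftedConj φ a x y) = shiftedConj ψ (F a) (F x) (F y) := by
  simp only [shiftedConj, map_mul, map_inv, hF]

theorem shiftedConj_self_distrib {φ : G →* G} {a : G} (hcomm : ∀ x, Commute a (φ (φ x)))
    (hbraid : a * φ a * a = φ a * a * φ a) (x y z : G) :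
    shiftedConj φ a x (shiftedConj φ a y z) =
      shiftedConj φ a (shiftedConj φ a x y) (shiftedConj φ a x z) := by
  have hx : (φ (φ x))⁻¹ * a * φ (φ x) = a := by
    rw [mul_assoc, (hcomm x).eq, inv_mul_cancel_left]
  have hbraid' : a * φ a * a * (φ a)⁻¹ = φ a * a := by
    rw [hbraid, mul_inv_cancel_right]
  symm
  simp only [shiftedConj, map_mul, map_inv]
  calc
    x * φ y * a * (φ x)⁻¹ * (φ x * φ (φ z) * φ a * (φ (φ x))⁻¹) * a *
        (φ x * φ (φ y) * φ a * (φ (φ x))⁻¹)⁻¹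
    _ = x * φ y * (a * φ (φ z)) * φ a * ((φ (φ x))⁻¹ * a * φ (φ x)) * (φ a)⁻¹ * (φ (φ y))⁻¹ *
          (φ x)⁻¹ := by group
    _ = x * φ y * φ (φ z) * (a * φ a * a * (φ a)⁻¹) * (φ (φ y))⁻¹ * (φ x)⁻¹ := by
      rw [hx, (hcomm z).eq]; group
    _ = x * φ y * φ (φ z) * φ a * (a * (φ (φ y))⁻¹) * (φ x)⁻¹ := by rw [hbraid']; group
    _ = x * (φ y * φ (φ z) * φ a * (φ (φ y))⁻¹) * a * (φ x)⁻¹ := by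
      rw [(hcomm y).inv_right.eq]; group

end ShiftedConj

section Swap

variable {α : Type*} [DecidableEq α]

theorem commute_swap_of_apply_eq_self {f : Equiv.Perm α} {a b : α} (ha : f a = a) (hb : f b = b) :
    Commute (Equiv.swap a b) f := by
  rw [commute_iff_eq, Equiv.mul_swap_eq_swap_mul, ha, hb]

theorem swap_braid {a b c : α} (hab : a ≠ b) (hac : a ≠ c) (hbc : b ≠ c) :
    Equiv.swap a b * Equiv.swap b c * Equiv.swap a b =
      Equiv.swap b c * Equiv.swap a b * Equiv.swap b c := by
  rw [Equiv.swap_mul_swap_mul_swap hab hac, Equiv.swap_comm a b, Equiv.swap_comm b c,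
    Equiv.swap_mul_swap_mul_swap hbc.symm hac.symm, Equiv.swap_comm]

end Swap

theorem shP_mul (f g : Equiv.Perm ℕ) : shP (f * g) = shP f * shP g := by
  ext (_ | n) <;> rfl

/-- The shift `shP` of permutations of `ℕ`, bundled as a group endomorphism. -/
def shPHom : Equiv.Perm ℕ →* Equiv.Perm ℕ := MonoidHom.mk' shP shP_mul

theorem shPHom_swap (i j : ℕ) : shPHom (Equiv.swap i j) = Equiv.swap (i + 1) (j + 1) := by
  ext (_ | n)
  · exact (Equiv.swap_apply_of_ne_of_ne i.succ_ne_zero.symm j.succ_ne_zero.symm).symm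
  · exact ((add_left_injective 1).swap_apply i j n).symm

theorem commute_swap_zero_one_shPHom_shPHom (f : Equiv.Perm ℕ) :
    Commute (Equiv.swap 0 1) (shPHom (shPHom f)) :=
  commute_swap_of_apply_eq_self rfl rfl

theorem scP_eq_shiftedConj (f g : Equiv.Perm ℕ) :
    scP f g = shiftedConj shPHom (Equiv.swap 0 1) f g := rfl

theorem scP_self_distrib (f g h : Equiv.Perm ℕ) :
    scP f (scP g h) = scP (scP f g) (scP f h) := by
  have hbraid : Equiv.swap 0 1 * shPHom (Equiv.swap 0 1) * Equiv.swap 0 1 =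
      shPHom (Equiv.swap 0 1) * Equiv.swap 0 1 * shPHom (Equiv.swap 0 1) := by
    rw [shPHom_swap]
    exact swap_braid (by decide) (by decide) (by decide)
  simp only [scP_eq_shiftedConj]
  exact shiftedConj_self_distrib commute_swap_zero_one_shPHom_shPHom hbraid f g h

theorem lift_eq_one_of_mem_braidRels {G : Type*} [Group G] {s : ℕ → G}
    (hcomm : ∀ i j, i + 2 ≤ j → Commute (s i) (s j))
    (hbraid : ∀ i, s i * s (i + 1) * s i = s (i + 1) * s i * s (i + 1)) :
    ∀ r ∈ braidRels, FreeGroup.lift s r = 1 := by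
  rintro r (⟨i, j, hij, rfl⟩ | ⟨i, rfl⟩)
  · simp only [map_mul, map_inv, FreeGroup.lift_apply_of]
    rw [(hcomm i j hij).eq, mul_inv_cancel_right, mul_inv_cancel]
  · simp only [map_mul, map_inv, FreeGroup.lift_apply_of]
    rw [hbraid i, mul_inv_cancel]

theorem commute_swap_succ_swap_succ {i j : ℕ} (hij : i + 2 ≤ j) :
    Commute (Equiv.swap i (i + 1)) (Equiv.swap j (j + 1)) :=
  commute_swap_of_apply_eq_self (Equiv.swap_apply_of_ne_of_ne (by lia) (by lia))
    (Equiv.swap_apply_of_ne_of_ne (by lia) (by lia))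

/-- The projection of braids to permutations, sending each Artin generator to the corresponding
adjacent transposition. -/
def permHom : Binf →* Equiv.Perm ℕ :=
  PresentedGroup.toGroup (f := fun i => Equiv.swap i (i + 1)) <|
    lift_eq_one_of_mem_braidRels (fun _ _ => commute_swap_succ_swap_succ)
      fun _ => swap_braid (by lia) (by lia) (by lia)

@[simp] theorem permHom_σ (i : ℕ) : permHom (σ i) = Equiv.swap i (i + 1) :=
  PresentedGroup.toGroup.of _

theorem permHom_sh (β : Binf) : permHom (sh β) = shPHom (permHom β) := by
  suffices h : permHom.comp sh = shPHom.comp permHom from DFunLike.congr_fun h β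
  refine PresentedGroup.ext fun i => ?_
  change permHom (sh (σ i)) = shPHom (permHom (σ i))
  rw [sh_σ, permHom_σ, permHom_σ, shPHom_swap]

theorem sc_eq_shiftedConj (β₁ β₂ : Binf) : sc β₁ β₂ = shiftedConj sh (σ 0) β₁ β₂ := rfl

theorem permHom_sc (β₁ β₂ : Binf) : permHom (sc β₁ β₂) = scP (permHom β₁) (permHom β₂) := by
  rw [sc_eq_shiftedConj, map_shiftedConj permHom_sh, permHom_σ, scP_eq_shiftedConj]

/-- the permutation shelf. The operation `scP` obeys the left
selfdistributivity law, and the group homomorphism `perm : Binf →* Perm ℕ`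
determined by `perm (σ i) = swap i (i+1)` (0-indexed) is a shelf morphism. -/
theorem permutation_shelf :
    (∀ f g h : Equiv.Perm ℕ, scP f (scP g h) = scP (scP f g) (scP f h)) ∧
    ∃ perm : Binf →* Equiv.Perm ℕ,
      (∀ i : ℕ, perm (σ i) = Equiv.swap i (i + 1)) ∧
      ∀ β₁ β₂ : Binf, perm (sc β₁ β₂) = scP (perm β₁) (perm β₂) :=
  ⟨scP_self_distrib, permHom, permHom_σ, permHom_sc⟩
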